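/- Let 0 < β₀ < 1 and let λ ∈ ℂ with Re λ < 0 and |Re λ| ≠ |Im λ|. Then there exists T₁ > 1 such that for every t₀ ≥ T₁ the following holds: for every b ∈ ℂ that lies in the image of the half-open interval [β₀, 1) under the map ρ ↦ t₀^{ρ−1}·E_{ρ,ρ}(λ·t₀^ρ), there exists a unique ρ* ∈ [β₀, 1] such that t₀^{ρ*−1}·E_{ρ*,ρ*}(λ·t₀^{ρ*}) = b. -/

import Mathlib

/-- The two-parameter Mittag-Leffler function with equal parameters,
`E_{β,β}(z) = ∑ₖ zᵏ / Γ(βk + β)`. -/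
noncomputable def mittagLeffler2 (β : ℝ) (z : ℂ) : ℂ :=
  ∑' k : ℕ, z ^ k / Complex.Gamma (β * k + β)

/-!
Write `L = log t`. Substituting `s = e^w` in Hankel's integral for `1/Γ` and summing the geometric
series turns `t^{ρ-1} E_{ρ,ρ}(l t^ρ)` into an integral of `e^{e^w} e^w / (e^{ρ(w-L)} - l)` over the
boundary of the strip `|Im w| ≤ θ`, where `π/2 < θ < |arg l|`. Such a `θ` exists because `Re l < 0`,
and it keeps the strip away from the poles for every `ρ ≤ 1`. The expansion
`l² / (ξ - l) = -l - ξ + ξ² / (ξ - l)` at `ξ = e^{ρ(w-L)}` gives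
`l² t · t^{ρ-1} E_{ρ,ρ}(l t^ρ) = e^{-ρL} ρ(1-ρ) / Γ(2-ρ) + r(ρ)`.
For large `L` the first term decreases in `ρ ∈ [β₀, 1]` at rate at least `β₀ e^{-ρL}`, while the
Lipschitz constant of `r` on `[ρ, 1]` is `O((1+L) e^{-2ρL})`, so `ρ` is determined by the value.
-/

open Complex MeasureTheory Set Filter Topology
open scoped Real

lemma integral_exp_smul_comp_exp {E : Type*} [NormedAddCommGroup E] [NormedSpace ℝ E]
    (g : ℝ → E) : ∫ u : ℝ, Real.exp u • g (Real.exp u) = ∫ r in Ioi 0, g r := by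
  have h := integral_image_eq_integral_abs_deriv_smul MeasurableSet.univ
    (fun u _ => (Real.hasDerivAt_exp u).hasDerivWithinAt) Real.exp_injective.injOn g
  simpa [abs_of_pos (Real.exp_pos _), Real.range_exp] using h.symm

lemma integrable_exp_smul_comp_exp_iff {E : Type*} [NormedAddCommGroup E] [NormedSpace ℝ E]
    (g : ℝ → E) :
    Integrable (fun u : ℝ => Real.exp u • g (Real.exp u)) ↔ IntegrableOn g (Ioi 0) := by
  have h := integrableOn_image_iff_integrableOn_abs_deriv_smul MeasurableSet.univ
    (fun u _ => (Real.hasDerivAt_exp u).hasDerivWithinAt) Real.exp_injective.injOn g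
  simpa [abs_of_pos (Real.exp_pos _), Real.range_exp] using h.symm

lemma integrable_exp_mul_sub_mul_exp {a c : ℝ} (ha : 0 < a) (hc : 0 < c) :
    Integrable (fun u : ℝ => Real.exp (a * u - c * Real.exp u)) := by
  have h : IntegrableOn (fun r : ℝ => r ^ (a - 1) * Real.exp (-c * r ^ (1 : ℝ))) (Ioi 0) :=
    integrableOn_rpow_mul_exp_neg_mul_rpow (by linarith) one_pos hc
  refine ((integrable_exp_smul_comp_exp_iff _).2 h).congr (ae_of_all _ fun u => ?_)
  simp only [Real.rpow_one, smul_eq_mul]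
  rw [← Real.exp_mul, ← Real.exp_add, ← Real.exp_add]
  ring_nf

lemma integrableOn_Ioi_exp_mul_sub_mul_exp (a x : ℝ) {c : ℝ} (hc : 0 < c) :
    IntegrableOn (fun u : ℝ => Real.exp (a * u - c * Real.exp u)) (Ioi x) := by
  have h := (integrable_exp_mul_sub_mul_exp (a := |a| + 1) (by positivity) hc).const_mul
    (Real.exp ((a - (|a| + 1)) * x))
  refine h.integrableOn.mono' (by fun_prop) (ae_restrict_of_forall_mem measurableSet_Ioi ?_)
  intro u hu
  rw [Real.norm_of_nonneg (by positivity), ← Real.exp_add, Real.exp_le_exp]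
  nlinarith [le_abs_self a, mem_Ioi.1 hu]

lemma integrable_abs_mul_exp_mul_sub_mul_exp {a c : ℝ} (ha : 0 < a) (hc : 0 < c) :
    Integrable (fun u : ℝ => |u| * Real.exp (a * u - c * Real.exp u)) := by
  have h := ((integrable_exp_mul_sub_mul_exp (a := a + a / 2) (by positivity) hc).add
    (integrable_exp_mul_sub_mul_exp (a := a - a / 2) (by linarith) hc)).const_mul (2 / a)
  refine h.mono' (by fun_prop) (ae_of_all _ fun u => ?_)
  have abs_le : |u| ≤ 2 / a * (Real.exp (a / 2 * u) + Real.exp (-(a / 2 * u))) := by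
    have hcosh : |a / 2 * u| ≤ Real.exp (a / 2 * u) + Real.exp (-(a / 2 * u)) :=
      abs_le'.2 ⟨by linarith [Real.add_one_le_exp (a / 2 * u), Real.exp_pos (-(a / 2 * u))],
        by linarith [Real.add_one_le_exp (-(a / 2 * u)), Real.exp_pos (a / 2 * u)]⟩
    rw [abs_mul, abs_of_pos (half_pos ha)] at hcosh
    field_simp at hcosh ⊢
    linarith
  rw [norm_mul, Real.norm_eq_abs, abs_abs, Real.norm_of_nonneg (Real.exp_pos _).le]
  refine (mul_le_mul_of_nonneg_right abs_le (Real.exp_pos _).le).trans_eq ?_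
  rw [Pi.add_apply, mul_assoc, add_mul, ← Real.exp_add, ← Real.exp_add]
  ring_nf

lemma tendsto_exp_mul_sub_mul_exp_atTop (a : ℝ) {c : ℝ} (hc : 0 < c) :
    Tendsto (fun u : ℝ => Real.exp (a * u - c * Real.exp u)) atTop (𝓝 0) := by
  refine ((tendsto_rpow_mul_exp_neg_mul_atTop_nhds_zero a c hc).comp
    Real.tendsto_exp_atTop).congr fun u => ?_
  rw [Function.comp_apply, ← Real.exp_mul, ← Real.exp_add]
  ring_nf

lemma tendsto_const_mul_exp_mul_atBot (B : ℝ) {b : ℝ} (hb : 0 < b) :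
    Tendsto (fun x : ℝ => B * Real.exp (b * x)) atBot (𝓝 0) := by
  simpa using (Real.tendsto_exp_atBot.comp (tendsto_id.const_mul_atBot hb)).const_mul B

lemma tendsto_integral_vertical_segment {F : ℂ → ℂ} {σ τ : ℝ} {f : Filter ℝ} {g : ℝ → ℝ}
    (hg : Tendsto g f (𝓝 0)) (hF : ∀ᶠ x : ℝ in f, ∀ y ∈ uIcc σ τ, ‖F (x + y * I)‖ ≤ g x) :
    Tendsto (fun x : ℝ => ∫ y in σ..τ, F (x + y * I)) f (𝓝 0) := by
  refine squeeze_zero_norm' (a := fun x => g x * |τ - σ|) ?_ (by simpa using hg.mul_const |τ - σ|)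
  filter_upwards [hF] with x hx
  exact intervalIntegral.norm_integral_le_of_norm_le_const fun y hy => hx y (uIoc_subset_uIcc hy)

section Rectangle

variable {F : ℂ → ℂ} {σ τ : ℝ}

lemma integral_Iic_sub_integral_Iic_add_integral_vertical_segment
    (hF : DifferentiableOn ℂ F {w | w.im ∈ uIcc σ τ})
    (hσ : Integrable fun u : ℝ => F (u + σ * I)) (hτ : Integrable fun u : ℝ => F (u + τ * I))
    (hbot : Tendsto (fun x : ℝ => ∫ y in σ..τ, F (x + y * I)) atBot (𝓝 0)) (x : ℝ) :
    (∫ u in Iic x, F (u + σ * I)) - (∫ u in Iic x, F (u + τ * I)) +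
      I * ∫ y in σ..τ, F (x + y * I) = 0 := by
  have rectangle (x' : ℝ) : (∫ u in x'..x, F (u + σ * I)) - (∫ u in x'..x, F (u + τ * I)) +
      I * (∫ y in σ..τ, F (x + y * I)) - I * (∫ y in σ..τ, F (x' + y * I)) = 0 := by
    have h := integral_boundary_rect_eq_zero_of_differentiableOn F (x' + σ * I) (x + τ * I)
      (hF.mono fun w hw => by simpa using (mem_reProdIm.1 hw).2)
    simpa using h
  have lim := (((intervalIntegral_tendsto_integral_Iic x hσ.integrableOn tendsto_id).sub
    (intervalIntegral_tendsto_integral_Iic x hτ.integrableOn tendsto_id)).add_const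
    (I * ∫ y in σ..τ, F (x + y * I))).sub (hbot.const_mul I)
  simpa using tendsto_nhds_unique lim (tendsto_const_nhds.congr fun x' => (rectangle x').symm)

lemma integral_horizontal_line_eq
    (hF : DifferentiableOn ℂ F {w | w.im ∈ uIcc σ τ})
    (hσ : Integrable fun u : ℝ => F (u + σ * I)) (hτ : Integrable fun u : ℝ => F (u + τ * I))
    (hbot : Tendsto (fun x : ℝ => ∫ y in σ..τ, F (x + y * I)) atBot (𝓝 0))
    (htop : Tendsto (fun x : ℝ => ∫ y in σ..τ, F (x + y * I)) atTop (𝓝 0)) :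
    ∫ u : ℝ, F (u + σ * I) = ∫ u : ℝ, F (u + τ * I) := by
  have tendsto_Iic {f : ℝ → ℂ} (hf : Integrable f) :
      Tendsto (fun x : ℝ => ∫ u in Iic x, f u) atTop (𝓝 (∫ u, f u)) :=
    (aecover_Iic tendsto_id).integral_tendsto_of_countably_generated hf
  have lim := ((tendsto_Iic hσ).sub (tendsto_Iic hτ)).add (htop.const_mul I)
  have h := tendsto_nhds_unique lim (tendsto_const_nhds.congr fun x =>
    (integral_Iic_sub_integral_Iic_add_integral_vertical_segment hF hσ hτ hbot x).symm)
  rwa [mul_zero, add_zero, sub_eq_zero] at h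

end Rectangle

/-- The difference `∫_{Im w = θ} F - ∫_{Im w = -θ} F` of the integrals along the two horizontal
lines that bound the strip `|Im w| ≤ θ`, both traversed from left to right. -/
noncomputable def stripIntegral (θ : ℝ) (F : ℂ → ℂ) : ℂ :=
  (∫ u : ℝ, F (u + θ * I)) - ∫ u : ℝ, F (u + (-θ : ℝ) * I)

/-- The integral of `F` along the image of Hankel's contour under the logarithm: in from `+∞ - iθ`,
up the segment `Re w = x`, `|Im w| ≤ θ`, and out to `+∞ + iθ`. -/
noncomputable def hankelIntegral (θ x : ℝ) (F : ℂ → ℂ) : ℂ :=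
  (∫ u in Ioi x, F (u + θ * I)) - (∫ u in Ioi x, F (u + (-θ : ℝ) * I)) +
    I * ∫ y in (-θ)..θ, F (x + y * I)

lemma hankelIntegral_const_mul (θ x : ℝ) (c : ℂ) (F : ℂ → ℂ) :
    hankelIntegral θ x (fun w => c * F w) = c * hankelIntegral θ x F := by
  simp only [hankelIntegral, integral_const_mul, intervalIntegral.integral_const_mul]
  ring

lemma hankelIntegral_eq_stripIntegral {F : ℂ → ℂ} {θ : ℝ} (hθ : 0 ≤ θ)
    (hF : DifferentiableOn ℂ F {w | |w.im| ≤ θ})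
    (hpos : Integrable fun u : ℝ => F (u + θ * I))
    (hneg : Integrable fun u : ℝ => F (u + (-θ : ℝ) * I))
    (hbot : Tendsto (fun x : ℝ => ∫ y in (-θ)..θ, F (x + y * I)) atBot (𝓝 0)) (x : ℝ) :
    hankelIntegral θ x F = stripIntegral θ F := by
  have hF' : DifferentiableOn ℂ F {w | w.im ∈ uIcc (-θ) θ} := hF.mono fun w hw =>
    abs_le.2 (by rwa [mem_ofPred_eq, uIcc_of_le (neg_le_self hθ)] at hw)
  have h := integral_Iic_sub_integral_Iic_add_integral_vertical_segment hF' hneg hpos hbot x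
  rw [hankelIntegral, stripIntegral,
    ← intervalIntegral.integral_Iic_add_Ioi (b := x) hpos.integrableOn hpos.integrableOn,
    ← intervalIntegral.integral_Iic_add_Ioi (b := x) hneg.integrableOn hneg.integrableOn]
  linear_combination h

section DoubleExponential

lemma norm_exp_exp (u σ : ℝ) :
    ‖exp (exp (u + σ * I))‖ = Real.exp (Real.cos σ * Real.exp u) := by
  rw [norm_exp, exp_re]
  simp [mul_comm]

lemma norm_exp_exp_le_of_re_nonpos {w : ℂ} (hw : w.re ≤ 0) : ‖exp (exp w)‖ ≤ Real.exp 1 := by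
  rw [norm_exp, Real.exp_le_exp]
  calc (exp w).re ≤ ‖exp w‖ := re_le_norm _
    _ = Real.exp w.re := norm_exp w
    _ ≤ 1 := Real.exp_le_one_iff.2 hw

lemma integrable_exp_exp_mul {σ : ℝ} (hσ : Real.cos σ < 0) {G : ℝ → ℂ}
    (hG : AEStronglyMeasurable G) {B b : ℝ} (hb : 0 < b)
    (hGB : ∀ u, ‖G u‖ ≤ B * Real.exp (b * u)) :
    Integrable fun u : ℝ => exp (exp (u + σ * I)) * G u := by
  have h := (integrable_exp_mul_sub_mul_exp hb (neg_pos.2 hσ)).const_mul B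
  refine h.mono' (.mul (by fun_prop) hG) (ae_of_all _ fun u => ?_)
  calc ‖exp (exp (u + σ * I)) * G u‖
      ≤ Real.exp (Real.cos σ * Real.exp u) * (B * Real.exp (b * u)) := by
        rw [norm_mul, norm_exp_exp]
        gcongr
        exact hGB u
    _ = B * Real.exp (b * u - -Real.cos σ * Real.exp u) := by
        rw [mul_left_comm, ← Real.exp_add]
        ring_nf

lemma hankelIntegral_exp_exp_mul_eq_stripIntegral {θ : ℝ} (hθ : 0 ≤ θ) (hcos : Real.cos θ < 0)
    {G : ℂ → ℂ} (hG : DifferentiableOn ℂ G {w | |w.im| ≤ θ}) {B b : ℝ} (hb : 0 < b)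
    (hGB : ∀ w : ℂ, |w.im| ≤ θ → ‖G w‖ ≤ B * Real.exp (b * w.re)) (x : ℝ) :
    hankelIntegral θ x (fun w => exp (exp w) * G w) =
      stripIntegral θ fun w => exp (exp w) * G w := by
  have integrable_line {σ : ℝ} (hσ : |σ| ≤ θ) (hcosσ : Real.cos σ < 0) :
      Integrable fun u : ℝ => exp (exp (u + σ * I)) * G (u + σ * I) := by
    have hcont : Continuous fun u : ℝ => G (u + σ * I) :=
      hG.continuousOn.comp_continuous (by fun_prop) fun u => by simpa using hσ
    exact integrable_exp_exp_mul hcosσ hcont.aestronglyMeasurable hb fun u => by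
      simpa using hGB (u + σ * I) (by simpa using hσ)
  refine hankelIntegral_eq_stripIntegral hθ ?_ (integrable_line (abs_of_nonneg hθ).le hcos)
    (integrable_line (by rw [abs_neg, abs_of_nonneg hθ]) (by rwa [Real.cos_neg])) ?_ x
  · exact (differentiable_exp.comp differentiable_exp).differentiableOn.mul hG
  refine tendsto_integral_vertical_segment (F := fun w => exp (exp w) * G w)
    (tendsto_const_mul_exp_mul_atBot (Real.exp 1 * B) hb) ?_
  filter_upwards [eventually_le_atBot 0] with x hx y hy
  rw [uIcc_of_le (neg_le_self hθ)] at hy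
  rw [norm_mul, mul_assoc]
  gcongr
  · exact norm_exp_exp_le_of_re_nonpos (by simpa using hx)
  · simpa using hGB (x + y * I) (by simpa using abs_le.2 hy)

lemma integrable_exp_exp_mul_exp {a : ℂ} (ha : 0 < a.re) {σ : ℝ} (hσ : Real.cos σ < 0) :
    Integrable fun u : ℝ => exp (exp (u + σ * I)) * exp (a * (u + σ * I)) := by
  refine integrable_exp_exp_mul hσ (by fun_prop) ha (B := Real.exp (-(a.im * σ))) fun u => ?_
  rw [norm_exp, ← Real.exp_add]
  simp [sub_eq_neg_add]

lemma integral_exp_exp_mul_exp_line_eq {a : ℂ} (ha : 0 < a.re) {σ τ : ℝ}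
    (hcos : ∀ y ∈ uIcc σ τ, Real.cos y < 0) :
    ∫ u : ℝ, exp (exp (u + σ * I)) * exp (a * (u + σ * I)) =
      ∫ u : ℝ, exp (exp (u + τ * I)) * exp (a * (u + τ * I)) := by
  obtain ⟨y₀, hy₀, hmax⟩ :=
    isCompact_uIcc.exists_isMaxOn nonempty_uIcc Real.continuous_cos.continuousOn
  set M := |a.im| * max |σ| |τ|
  have norm_le (u y : ℝ) (hy : y ∈ uIcc σ τ) :
      ‖exp (exp (u + y * I)) * exp (a * (u + y * I))‖ ≤
        Real.exp M * Real.exp (a.re * u - -Real.cos y₀ * Real.exp u) := by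
    have hM : -(a.im * y) ≤ M := by
      calc -(a.im * y) ≤ |a.im| * |y| := by rw [← abs_mul]; exact neg_le_abs _
        _ ≤ M := by
          refine mul_le_mul_of_nonneg_left ?_ (abs_nonneg _)
          rcases mem_uIcc.1 hy with ⟨h₁, h₂⟩ | ⟨h₁, h₂⟩
          · exact abs_le_max_abs_abs h₁ h₂
          · exact (abs_le_max_abs_abs h₁ h₂).trans_eq (max_comm _ _)
    have hcosy : Real.cos y * Real.exp u ≤ Real.cos y₀ * Real.exp u := by
      gcongr; exact hmax hy
    rw [norm_mul, norm_exp_exp, norm_exp, ← Real.exp_add, ← Real.exp_add, Real.exp_le_exp]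
    simp only [mul_re, add_re, add_im, ofReal_re, ofReal_im, I_re, I_im, mul_im]
    linarith
  have hy₀pos : 0 < -Real.cos y₀ := neg_pos.2 (hcos y₀ hy₀)
  let F : ℂ → ℂ := fun w => exp (exp w) * exp (a * w)
  refine integral_horizontal_line_eq (F := F) (by fun_prop)
    (integrable_exp_exp_mul_exp ha (hcos σ left_mem_uIcc))
    (integrable_exp_exp_mul_exp ha (hcos τ right_mem_uIcc)) ?_ ?_
  · refine tendsto_integral_vertical_segment (F := F)
      (tendsto_const_mul_exp_mul_atBot (Real.exp M) ha)
      (.of_forall fun u y hy => (norm_le u y hy).trans ?_)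
    gcongr
    nlinarith [Real.exp_pos u]
  · have htop := (tendsto_exp_mul_sub_mul_exp_atTop a.re hy₀pos).const_mul (Real.exp M)
    rw [mul_zero] at htop
    exact tendsto_integral_vertical_segment (F := F) htop (.of_forall norm_le)

end DoubleExponential

section Hankel

lemma integral_exp_mul_mul_exp_neg_exp {a : ℂ} (ha : 0 < a.re) :
    ∫ u : ℝ, exp (a * u) * exp (-exp u) = Gamma a := by
  have h := integral_cpow_mul_exp_neg_mul_Ioi ha one_pos
  rw [← integral_exp_smul_comp_exp] at h
  simp only [ofReal_one, one_mul, div_one, one_cpow] at h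
  rw [← h]
  congr 1 with u
  have hexp : exp (a * u) = exp u * exp (u * (a - 1)) := by rw [← exp_add]; ring_nf
  rw [cpow_def_of_ne_zero (by simp), ← ofReal_log (Real.exp_pos u).le, Real.log_exp, real_smul,
    ofReal_exp, ← mul_assoc, hexp]

lemma sin_pi_mul_mul_Gamma {a : ℂ} (ha : Gamma a ≠ 0) :
    sin (π * a) * Gamma a = π * (Gamma (1 - a))⁻¹ := by
  have h : Gamma (1 - a) = (Gamma a)⁻¹ * (π / sin (π * a)) := by
    rw [← Gamma_mul_Gamma_one_sub, inv_mul_cancel_left₀ ha]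
  rw [h, mul_inv, inv_inv, inv_div, mul_left_comm, mul_div_cancel₀ _ (by simp [Real.pi_ne_zero]),
    mul_comm]

lemma cos_neg_of_mem_Ioc {θ : ℝ} (hθ : θ ∈ Ioc (π / 2) π) : Real.cos θ < 0 :=
  Real.cos_neg_of_pi_div_two_lt_of_lt hθ.1 (by linarith [hθ.2, Real.pi_pos])

lemma stripIntegral_exp_exp_mul_exp {θ : ℝ} (hθ : θ ∈ Ioc (π / 2) π) {a : ℂ} (ha : 0 < a.re) :
    stripIntegral θ (fun w => exp (exp w) * exp (a * w)) = 2 * π * I * (Gamma (1 - a))⁻¹ := by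
  have integral_line {σ : ℝ} (hσ : exp (σ * I) = -1) :
      ∫ u : ℝ, exp (exp (u + σ * I)) * exp (a * (u + σ * I)) = exp (a * (σ * I)) * Gamma a := by
    rw [← integral_exp_mul_mul_exp_neg_exp ha, ← integral_const_mul]
    congr 1 with u
    rw [exp_add, hσ, mul_add, exp_add]
    ring_nf
  have shift_pos := integral_exp_exp_mul_exp_line_eq (σ := θ) (τ := π) ha fun y hy => by
    rw [uIcc_of_le hθ.2] at hy
    exact cos_neg_of_mem_Ioc ⟨hθ.1.trans_le hy.1, hy.2⟩
  have shift_neg := integral_exp_exp_mul_exp_line_eq (σ := -θ) (τ := -π) ha fun y hy => by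
    rw [uIcc_of_ge (neg_le_neg hθ.2)] at hy
    rw [← Real.cos_neg]
    exact cos_neg_of_mem_Ioc ⟨by linarith [hθ.1, hy.2], by linarith [hy.1]⟩
  rw [stripIntegral, shift_pos, shift_neg, integral_line exp_pi_mul_I,
    integral_line (by push_cast; rw [neg_mul, exp_neg_pi_mul_I])]
  have hsin := two_sin (π * a)
  have hI := I_mul_I
  have h := sin_pi_mul_mul_Gamma (Gamma_ne_zero_of_re_pos ha)
  have hexp_pos : a * (π * I) = π * a * I := by ring
  have hexp_neg : a * ((-π : ℝ) * I) = -(π * a) * I := by push_cast; ring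
  rw [hexp_pos, hexp_neg]
  linear_combination 2 * I * h - I * Gamma a * hsin -
    Gamma a * (exp (-(π * a) * I) - exp (π * a * I)) * hI

lemma differentiable_integral_mul_exp_mul {α : Type*} [MeasurableSpace α] {μ : Measure α}
    {g w : α → ℂ} (hg : AEStronglyMeasurable g μ) (hw : AEStronglyMeasurable w μ)
    (hgw : ∀ c : ℝ, Integrable (fun x => ‖g x‖ * Real.exp (c * ‖w x‖)) μ) :
    Differentiable ℂ fun a : ℂ => ∫ x, g x * exp (a * w x) ∂μ := by
  intro a₀
  have hmeas (a : ℂ) : AEStronglyMeasurable (fun x => g x * exp (a * w x)) μ :=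
    hg.mul (continuous_exp.comp_aestronglyMeasurable (hw.const_mul a))
  have norm_exp_mul_le (a : ℂ) (x : α) : ‖exp (a * w x)‖ ≤ Real.exp (‖a‖ * ‖w x‖) := by
    simpa using norm_exp_le_exp_norm (a * w x)
  refine (hasDerivAt_integral_of_dominated_loc_of_deriv_le (Metric.ball_mem_nhds a₀ one_pos)
    (.of_forall hmeas) ((hgw ‖a₀‖).mono' (hmeas a₀) (ae_of_all _ fun x => ?_))
    (F' := fun a x => g x * exp (a * w x) * w x) ((hmeas a₀).mul hw)
    (bound := fun x => ‖g x‖ * Real.exp ((‖a₀‖ + 2) * ‖w x‖)) (ae_of_all _ fun x a ha => ?_)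
    (hgw _) (ae_of_all _ fun x a _ => ?_)).2.differentiableAt
  · rw [norm_mul]
    gcongr
    exact norm_exp_mul_le a₀ x
  · have hnorm : ‖a‖ ≤ ‖a₀‖ + 1 := by
      linarith [norm_le_norm_add_norm_sub' a a₀, mem_ball_iff_norm.1 ha]
    have hle : ‖w x‖ ≤ Real.exp ‖w x‖ := by linarith [Real.add_one_le_exp ‖w x‖]
    calc ‖g x * exp (a * w x) * w x‖
        ≤ ‖g x‖ * Real.exp ((‖a₀‖ + 1) * ‖w x‖) * Real.exp ‖w x‖ := by
          rw [norm_mul, norm_mul]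
          gcongr
          exact (norm_exp_mul_le a x).trans (by gcongr)
      _ = ‖g x‖ * Real.exp ((‖a₀‖ + 2) * ‖w x‖) := by
          rw [mul_assoc, ← Real.exp_add]
          ring_nf
  · simpa [mul_assoc] using (((hasDerivAt_id a).mul_const (w x)).cexp).const_mul (g x)

lemma integrableOn_Ioi_norm_exp_exp_mul_exp_mul_norm {σ : ℝ} (hσ : Real.cos σ < 0) (x c : ℝ) :
    IntegrableOn (fun u : ℝ => ‖exp (exp (u + σ * I))‖ * Real.exp (c * ‖(u + σ * I : ℂ)‖))
      (Ioi x) := by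
  have h := (integrableOn_Ioi_exp_mul_sub_mul_exp |c| x (neg_pos.2 hσ)).const_mul
    (Real.exp (|c| * (2 * |x| + |σ|)))
  refine h.mono' (by fun_prop) (ae_restrict_of_forall_mem measurableSet_Ioi fun u hu => ?_)
  have norm_le : ‖(u + σ * I : ℂ)‖ ≤ u + (2 * |x| + |σ|) := by
    have hu' : |u| ≤ u + 2 * |x| :=
      abs_le.2 ⟨by linarith [neg_abs_le x, mem_Ioi.1 hu], by linarith [abs_nonneg x]⟩
    have htri := norm_add_le (u : ℂ) (σ * I)
    simp only [norm_mul, norm_real, norm_I, mul_one, Real.norm_eq_abs] at htri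
    linarith
  rw [Real.norm_of_nonneg (by positivity), norm_exp_exp, ← Real.exp_add, ← Real.exp_add,
    Real.exp_le_exp]
  have hc : c * ‖(u + σ * I : ℂ)‖ ≤ |c| * (u + (2 * |x| + |σ|)) :=
    mul_le_mul (le_abs_self c) norm_le (norm_nonneg _) (abs_nonneg c)
  linarith

lemma integrableOn_Ioi_exp_exp_mul_exp {σ : ℝ} (hσ : Real.cos σ < 0) (x : ℝ) (a : ℂ) :
    IntegrableOn (fun u : ℝ => exp (exp (u + σ * I)) * exp (a * (u + σ * I))) (Ioi x) := by
  refine (integrableOn_Ioi_norm_exp_exp_mul_exp_mul_norm hσ x ‖a‖).mono' (by fun_prop)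
    (ae_of_all _ fun u => ?_)
  rw [norm_mul, ← norm_mul a]
  gcongr
  exact norm_exp_le_exp_norm _

lemma differentiable_hankelIntegral_exp_exp_mul_exp {θ : ℝ} (hθ : 0 ≤ θ) (hcos : Real.cos θ < 0)
    (x : ℝ) :
    Differentiable ℂ fun a : ℂ => hankelIntegral θ x fun w => exp (exp w) * exp (a * w) := by
  have differentiable_ray {σ : ℝ} (hσ : Real.cos σ < 0) : Differentiable ℂ fun a : ℂ =>
      ∫ u in Ioi x, exp (exp (u + σ * I)) * exp (a * (u + σ * I)) :=
    differentiable_integral_mul_exp_mul (by fun_prop) (by fun_prop)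
      (integrableOn_Ioi_norm_exp_exp_mul_exp_mul_norm hσ x)
  have differentiable_segment : Differentiable ℂ fun a : ℂ =>
      ∫ y in (-θ)..θ, exp (exp (x + y * I)) * exp (a * (x + y * I)) := by
    simp only [intervalIntegral.integral_of_le (neg_le_self hθ)]
    refine differentiable_integral_mul_exp_mul (by fun_prop) (by fun_prop) fun c => ?_
    exact Continuous.integrableOn_Ioc (by fun_prop)
  exact ((differentiable_ray hcos).sub (differentiable_ray (by rwa [Real.cos_neg]))).add
    (differentiable_segment.const_mul I)

theorem hankelIntegral_exp_exp_mul_exp {θ : ℝ} (hθ : θ ∈ Ioc (π / 2) π) (x : ℝ) (a : ℂ) :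
    hankelIntegral θ x (fun w => exp (exp w) * exp (a * w)) =
      2 * π * I * (Gamma (1 - a))⁻¹ := by
  have hθ₀ : 0 ≤ θ := by linarith [hθ.1, Real.pi_pos]
  have hcos := cos_neg_of_mem_Ioc hθ
  have eq_of_re_pos (a : ℂ) (ha : 0 < a.re) :
      hankelIntegral θ x (fun w => exp (exp w) * exp (a * w)) =
        2 * π * I * (Gamma (1 - a))⁻¹ := by
    rw [← stripIntegral_exp_exp_mul_exp hθ ha]
    refine hankelIntegral_exp_exp_mul_eq_stripIntegral hθ₀ hcos (by fun_prop) ha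
      (B := Real.exp (|a.im| * θ)) (fun w hw => ?_) x
    rw [norm_exp, ← Real.exp_add, Real.exp_le_exp, mul_re]
    have him : -(a.im * w.im) ≤ |a.im| * θ :=
      (neg_le_abs _).trans (by rw [abs_mul]; gcongr)
    linarith
  have hGamma : Differentiable ℂ fun a : ℂ => 2 * π * I * (Gamma (1 - a))⁻¹ :=
    (differentiable_one_div_Gamma.comp (differentiable_id.const_sub 1)).const_mul _
  -- Both sides are entire in `a`, so the identity extends from `0 < re a` to all `a`.
  have heq : (fun a : ℂ => hankelIntegral θ x fun w => exp (exp w) * exp (a * w)) =ᶠ[𝓝 1]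
      fun a => 2 * π * I * (Gamma (1 - a))⁻¹ :=
    (continuous_re.continuousAt.eventually (lt_mem_nhds (by simp))).mono eq_of_re_pos
  exact congrFun (AnalyticOnNhd.eq_of_eventuallyEq
    (fun a _ => (differentiable_hankelIntegral_exp_exp_mul_exp hθ₀ hcos x).analyticAt a)
    (fun a _ => hGamma.analyticAt a) heq) a

end Hankel

section MittagLeffler

lemma hasSum_integral_mul_pow {α : Type*} [MeasurableSpace α] {μ : Measure α} {A q : α → ℂ}
    (hA : Integrable A μ) (hq : AEStronglyMeasurable q μ) {r : ℝ} (hr₀ : 0 ≤ r) (hr : r < 1)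
    (hqr : ∀ᵐ x ∂μ, ‖q x‖ ≤ r) :
    HasSum (fun k : ℕ => ∫ x, A x * q x ^ k ∂μ) (∫ x, A x * (1 - q x)⁻¹ ∂μ) := by
  refine hasSum_integral_of_dominated_convergence (fun k x => ‖A x‖ * r ^ k)
    (fun k => hA.1.mul (hq.pow k)) (fun k => ?_)
    (ae_of_all _ fun x => (summable_geometric_of_lt_one hr₀ hr).mul_left _) ?_ ?_
  · filter_upwards [hqr] with x hx
    rw [norm_mul, norm_pow]
    gcongr
  · simp_rw [tsum_mul_left]
    exact hA.norm.mul_const _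
  · filter_upwards [hqr] with x hx
    exact (hasSum_geometric_of_norm_lt_one (hx.trans_lt hr)).mul_left _

lemma hasSum_hankelIntegral_mul_pow {θ x : ℝ} (hθ : 0 ≤ θ) {A q : ℂ → ℂ} (hA : Continuous A)
    (hq : Continuous q) (hpos : IntegrableOn (fun u : ℝ => A (u + θ * I)) (Ioi x))
    (hneg : IntegrableOn (fun u : ℝ => A (u + (-θ : ℝ) * I)) (Ioi x)) {r : ℝ} (hr : r < 1)
    (hqr : ∀ w : ℂ, x ≤ w.re → ‖q w‖ ≤ r) :
    HasSum (fun k : ℕ => hankelIntegral θ x fun w => A w * q w ^ k)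
      (hankelIntegral θ x fun w => A w * (1 - q w)⁻¹) := by
  have hr₀ : 0 ≤ r := (norm_nonneg _).trans (hqr x (by simp))
  have hasSum_ray {σ : ℝ} (hσ : IntegrableOn (fun u : ℝ => A (u + σ * I)) (Ioi x) volume) :
      HasSum (fun k : ℕ => ∫ u in Ioi x, A (u + σ * I) * q (u + σ * I) ^ k)
        (∫ u in Ioi x, A (u + σ * I) * (1 - q (u + σ * I))⁻¹) :=
    hasSum_integral_mul_pow hσ (by fun_prop) hr₀ hr
      (ae_restrict_of_forall_mem measurableSet_Ioi fun u hu => hqr _ (by simpa using hu.le))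
  have hasSum_segment : HasSum (fun k : ℕ => ∫ y in (-θ)..θ, A (x + y * I) * q (x + y * I) ^ k)
      (∫ y in (-θ)..θ, A (x + y * I) * (1 - q (x + y * I))⁻¹) := by
    simp_rw [intervalIntegral.integral_of_le (neg_le_self hθ)]
    exact hasSum_integral_mul_pow (Continuous.integrableOn_Ioc (by fun_prop)) (by fun_prop) hr₀ hr
      (ae_of_all _ fun y => hqr _ (by simp))
  exact ((hasSum_ray hpos).sub (hasSum_ray hneg)).add (hasSum_segment.mul_left I)

lemma hasSum_pow_mul_exp_mul_inv_Gamma {θ : ℝ} (hθ : θ ∈ Ioc (π / 2) π) {ρ : ℝ} (hρ : 0 ≤ ρ)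
    {l : ℂ} {L x : ℝ} (hx : ‖l‖ * Real.exp (-(ρ * (x - L))) < 1) :
    HasSum (fun k : ℕ => l ^ k * exp ((ρ * k + ρ) * L) * (2 * π * I * (Gamma (ρ * k + ρ))⁻¹))
      (hankelIntegral θ x fun w => exp (exp w) * (exp w * (exp (ρ * (w - L)) - l)⁻¹)) := by
  have hcos := cos_neg_of_mem_Ioc hθ
  have integrable_ray {σ : ℝ} (hσ : Real.cos σ < 0) :=
    (integrableOn_Ioi_exp_exp_mul_exp hσ x (1 - ρ)).const_mul (exp (ρ * L))
  have hsum := hasSum_hankelIntegral_mul_pow (by linarith [hθ.1, Real.pi_pos])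
    (A := fun w => exp (ρ * L) * (exp (exp w) * exp ((1 - ρ) * w)))
    (q := fun w => l * exp (-(ρ * (w - L)))) (by fun_prop) (by fun_prop)
    (integrable_ray hcos) (integrable_ray (by rwa [Real.cos_neg])) hx fun w hw => by
      rw [norm_mul, norm_exp]
      gcongr
      simpa using mul_le_mul_of_nonneg_left (sub_le_sub_right hw L) hρ
  convert hsum using 2 with k
  · have hk : 1 - (1 - (ρ * k + ρ) : ℂ) = ρ * k + ρ := by ring
    rw [← hk, ← hankelIntegral_exp_exp_mul_exp hθ x, ← hankelIntegral_const_mul, hk]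
    congr 1 with w
    have hexp : exp ((ρ * k + ρ) * L) * exp ((1 - (ρ * k + ρ)) * w) =
        exp (ρ * L) * exp ((1 - ρ) * w) * exp (k * -(ρ * (w - L))) := by
      simp only [← exp_add]
      ring_nf
    rw [mul_pow, ← exp_nat_mul]
    linear_combination l ^ k * exp (exp w) * hexp
  · ext w
    have hfactor : exp (ρ * (w - L)) - l =
        exp (ρ * (w - L)) * (1 - l * exp (-(ρ * (w - L)))) := by
      rw [mul_one_sub, mul_left_comm, ← exp_add, add_neg_cancel, exp_zero, mul_one]
    have hexp : exp (ρ * L) * exp ((1 - ρ) * w) = exp w * exp (-(ρ * (w - L))) := by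
      simp only [← exp_add]
      ring_nf
    rw [hfactor, mul_inv, ← exp_neg]
    linear_combination -(exp (exp w) * (1 - l * exp (-(ρ * (w - L))))⁻¹) * hexp

theorem rpow_mul_mittagLeffler2_eq_hankelIntegral {θ : ℝ} (hθ : θ ∈ Ioc (π / 2) π) {ρ t : ℝ}
    (hρ : 0 ≤ ρ) (ht : 0 < t) {l : ℂ} {x : ℝ}
    (hx : ‖l‖ * Real.exp (-(ρ * (x - Real.log t))) < 1) :
    ((t ^ (ρ - 1) : ℝ) : ℂ) * mittagLeffler2 ρ (l * ((t ^ ρ : ℝ) : ℂ)) =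
      (t : ℂ)⁻¹ * (2 * π * I)⁻¹ * hankelIntegral θ x fun w =>
        exp (exp w) * (exp w * (exp (ρ * (w - Real.log t)) - l)⁻¹) := by
  rw [← (hasSum_pow_mul_exp_mul_inv_Gamma hθ hρ hx).tsum_eq, mittagLeffler2, ← tsum_mul_left,
    ← tsum_mul_left]
  congr 1 with k
  have ht' : (t : ℂ) ≠ 0 := ofReal_ne_zero.2 ht.ne'
  have hpow : exp ((ρ * k + ρ) * Real.log t) =
      (t : ℂ) * ((t ^ (ρ - 1) : ℝ) : ℂ) * ((t ^ ρ : ℝ) : ℂ) ^ k := by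
    have hreal : Real.exp ((ρ * k + ρ) * Real.log t) = t * t ^ (ρ - 1) * (t ^ ρ) ^ k := by
      rw [Real.rpow_sub_one ht.ne', mul_div_cancel₀ _ ht.ne', ← Real.rpow_mul_natCast ht.le,
        ← Real.rpow_add ht, Real.rpow_def_of_pos ht]
      ring_nf
    exact_mod_cast congrArg ofReal hreal
  rw [hpow, mul_pow]
  field_simp

end MittagLeffler

section Sector

lemma exists_le_norm_exp_sub {l : ℂ} (hl : l ≠ 0) {θ : ℝ} (hθ : θ < |arg l|) :
    ∃ ε > 0, ∀ ζ : ℂ, |ζ.im| ≤ θ → ε ≤ ‖exp ζ - l‖ := by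
  have hangle : ContinuousAt (fun z : ℂ => InnerProductGeometry.angle 1 z) l :=
    (InnerProductGeometry.continuousAt_angle (x := ((1 : ℂ), l)) one_ne_zero hl).comp
      (f := fun z : ℂ => ((1 : ℂ), z)) (by fun_prop)
  have hnhds : ∀ᶠ z in 𝓝 l, θ < InnerProductGeometry.angle 1 z :=
    hangle.eventually_const_lt (hθ.trans_eq (angle_one_left hl).symm)
  obtain ⟨ε, hε, hball⟩ := Metric.eventually_nhds_iff.1 hnhds
  refine ⟨ε, hε, fun ζ hζ => not_lt.1 fun hlt => ?_⟩
  have harg : arg (exp ζ) = ζ.im := by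
    have him := abs_lt.1 (hζ.trans_lt (hθ.trans_le (abs_arg_le_pi l)))
    rw [← log_im, log_exp him.1 him.2.le]
  have hclose := hball (y := exp ζ) (by rwa [dist_eq_norm])
  rw [angle_one_left (exp_ne_zero ζ), harg] at hclose
  exact hζ.not_gt hclose

lemma exists_le_norm_exp_sub_of_re_neg {l : ℂ} (hl : l.re < 0) :
    ∃ θ ∈ Ioc (π / 2) π, ∃ ε > 0, ∀ ζ : ℂ, |ζ.im| ≤ θ → ε ≤ ‖exp ζ - l‖ := by
  have harg : π / 2 < |arg l| := not_le.1 fun h => by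
    rw [abs_arg_le_pi_div_two_iff] at h
    exact h.not_gt hl
  have hl' : l ≠ 0 := by rintro rfl; simp at hl
  obtain ⟨θ, hθ, hθ'⟩ := exists_between harg
  exact ⟨θ, ⟨hθ, hθ'.le.trans (abs_arg_le_pi l)⟩, exists_le_norm_exp_sub hl' hθ'⟩

end Sector

/-- The remainder `ξ² / (ξ - l)` of the expansion `l² / (ξ - l) = -l - ξ + ξ² / (ξ - l)` at
`ξ = e^ζ`; integrating it gives the error term in the large-time asymptotics of the Mittag-Leffler
function. -/
noncomputable def remainderKernel (l ζ : ℂ) : ℂ := exp (2 * ζ) * (exp ζ - l)⁻¹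

/-- The integral of `remainderKernel` in the expansion of `l² t · t^{ρ-1} E_{ρ,ρ}(l t^ρ)` with
`L = log t`, before division by `2πi`. -/
noncomputable def remainderIntegral (l : ℂ) (θ L ρ : ℝ) : ℂ :=
  stripIntegral θ fun w => exp (exp w) * (exp w * remainderKernel l (ρ * (w - L)))

section Remainder

variable {l : ℂ} {θ ε : ℝ}

lemma abs_im_ofReal_mul_sub_ofReal_le {ρ : ℝ} (hρ₀ : 0 ≤ ρ) (hρ₁ : ρ ≤ 1) {w : ℂ}
    (hw : |w.im| ≤ θ) (L : ℝ) : |((ρ : ℂ) * (w - L)).im| ≤ θ := by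
  have him : ((ρ : ℂ) * (w - L)).im = ρ * w.im := by simp
  rw [him, abs_mul, abs_of_nonneg hρ₀]
  exact (mul_le_of_le_one_left (abs_nonneg _) hρ₁).trans hw

lemma norm_remainderKernel_le (hε : 0 < ε) {ζ : ℂ} (hζ : ε ≤ ‖exp ζ - l‖) :
    ‖remainderKernel l ζ‖ ≤ ε⁻¹ * Real.exp (2 * ζ.re) := by
  have hexp : ‖exp (2 * ζ)‖ = Real.exp (2 * ζ.re) := by simp [norm_exp]
  rw [remainderKernel, norm_mul, norm_inv, hexp, mul_comm]
  gcongr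

lemma hasDerivAt_remainderKernel {ζ : ℂ} (hζ : exp ζ - l ≠ 0) :
    HasDerivAt (remainderKernel l) (remainderKernel l ζ * (1 - l * (exp ζ - l)⁻¹)) ζ := by
  have hexp : HasDerivAt (fun ζ : ℂ => exp (2 * ζ)) (exp (2 * ζ) * 2) ζ := by
    simpa using ((hasDerivAt_id ζ).const_mul 2).cexp
  refine (hexp.mul (((hasDerivAt_exp ζ).sub_const l).fun_inv hζ)).congr_deriv ?_
  rw [remainderKernel]
  field_simp
  ring

lemma norm_remainderKernel_mul_one_sub_le (hε : 0 < ε) {ζ : ℂ} (hζ : ε ≤ ‖exp ζ - l‖) :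
    ‖remainderKernel l ζ * (1 - l * (exp ζ - l)⁻¹)‖ ≤
      ε⁻¹ * (1 + ‖l‖ * ε⁻¹) * Real.exp (2 * ζ.re) := by
  have hfactor : ‖1 - l * (exp ζ - l)⁻¹‖ ≤ 1 + ‖l‖ * ε⁻¹ := by
    refine (norm_sub_le _ _).trans ?_
    rw [norm_one, norm_mul, norm_inv]
    gcongr
  rw [norm_mul, mul_right_comm]
  gcongr
  exact norm_remainderKernel_le hε hζ

lemma norm_sub_ofReal_le {w : ℂ} (hw : |w.im| ≤ θ) {L : ℝ} (hL : 0 ≤ L) :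
    ‖w - L‖ ≤ (1 + L) * (|w.re| + θ + 1) := by
  have hnorm : ‖w - L‖ ≤ |w.re| + |w.im| + L := by
    refine (norm_sub_le _ _).trans ?_
    rw [norm_real, Real.norm_of_nonneg hL]
    gcongr
    exact norm_le_abs_re_add_abs_im w
  nlinarith [abs_nonneg w.re, abs_nonneg w.im]

lemma exp_two_mul_mul_sub_le {ρ₁ ρ : ℝ} (hρ₀ : 0 ≤ ρ) (hρ₁ : ρ₁ ≤ ρ) (hρ : ρ ≤ 1) (u : ℝ) {L : ℝ}
    (hL : 0 ≤ L) :
    Real.exp (2 * (ρ * (u - L))) ≤ Real.exp (-(2 * ρ₁ * L)) * (1 + Real.exp (2 * u)) := by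
  have hu : Real.exp (2 * ρ * u) ≤ 1 + Real.exp (2 * u) := by
    rcases le_total u 0 with hu | hu
    · have : Real.exp (2 * ρ * u) ≤ 1 := Real.exp_le_one_iff.2 (by nlinarith)
      linarith [Real.exp_pos (2 * u)]
    · have : Real.exp (2 * ρ * u) ≤ Real.exp (2 * u) := Real.exp_le_exp.2 (by nlinarith)
      linarith
  calc Real.exp (2 * (ρ * (u - L))) = Real.exp (-(2 * ρ * L)) * Real.exp (2 * ρ * u) := by
        rw [← Real.exp_add]
        ring_nf
    _ ≤ Real.exp (-(2 * ρ₁ * L)) * (1 + Real.exp (2 * u)) := by gcongr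

lemma integrable_exp_mul_sub_mul_exp_mul_abs_add (C : ℝ) {c : ℝ} (hc : 0 < c) :
    Integrable fun u : ℝ =>
      Real.exp (u - c * Real.exp u) * ((|u| + C) * (1 + Real.exp (2 * u))) := by
  have hweight {a : ℝ} (ha : 0 < a) :=
    (integrable_abs_mul_exp_mul_sub_mul_exp ha hc).add
      ((integrable_exp_mul_sub_mul_exp ha hc).const_mul C)
  refine ((hweight one_pos).add (hweight three_pos)).congr (ae_of_all _ fun u => ?_)
  have hexp : Real.exp (3 * u - c * Real.exp u) =
      Real.exp (u - c * Real.exp u) * Real.exp (2 * u) := by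
    rw [← Real.exp_add]
    ring_nf
  simp only [Pi.add_apply, hexp, one_mul]
  ring

variable (hε : 0 < ε) (hl : ∀ ζ : ℂ, |ζ.im| ≤ θ → ε ≤ ‖exp ζ - l‖)
include hε hl

lemma norm_remainderKernel_mul_sub_le {ρ₁ ρ₂ : ℝ} (hρ₁ : 0 ≤ ρ₁) (hρ : ρ₁ ≤ ρ₂) (hρ₂ : ρ₂ ≤ 1)
    {w : ℂ} (hw : |w.im| ≤ θ) {L : ℝ} (hL : 0 ≤ L) :
    ‖remainderKernel l (ρ₂ * (w - L)) - remainderKernel l (ρ₁ * (w - L))‖ ≤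
      ε⁻¹ * (1 + ‖l‖ * ε⁻¹) * ((1 + L) * Real.exp (-(2 * ρ₁ * L))) *
        ((|w.re| + θ + 1) * (1 + Real.exp (2 * w.re))) * (ρ₂ - ρ₁) := by
  set K' : ℝ → ℂ := fun ρ => remainderKernel l (ρ * (w - L)) *
    (1 - l * (exp (ρ * (w - L)) - l)⁻¹) * (w - L)
  have le_norm (ρ : ℝ) (h : ρ ∈ Icc ρ₁ ρ₂) : ε ≤ ‖exp (ρ * (w - L)) - l‖ :=
    hl _ (abs_im_ofReal_mul_sub_ofReal_le (hρ₁.trans h.1) (h.2.trans hρ₂) hw L)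
  have hderiv (ρ : ℝ) (h : ρ ∈ Icc ρ₁ ρ₂) : HasDerivWithinAt
      (fun ρ : ℝ => remainderKernel l (ρ * (w - L))) (K' ρ) (Icc ρ₁ ρ₂) ρ := by
    have hline : HasDerivAt (fun ρ : ℝ => (ρ : ℂ) * (w - L)) (w - L) ρ := by
      simpa using (ofRealCLM.hasDerivAt (x := ρ)).mul_const (w - L)
    have hne := norm_pos_iff.1 (hε.trans_le (le_norm ρ h))
    exact ((hasDerivAt_remainderKernel hne).comp ρ hline).hasDerivWithinAt
  have hbound (ρ : ℝ) (h : ρ ∈ Icc ρ₁ ρ₂) : ‖K' ρ‖ ≤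
      ε⁻¹ * (1 + ‖l‖ * ε⁻¹) * ((1 + L) * Real.exp (-(2 * ρ₁ * L))) *
        ((|w.re| + θ + 1) * (1 + Real.exp (2 * w.re))) := by
    have hre : ((ρ : ℂ) * (w - L)).re = ρ * (w.re - L) := by simp
    calc ‖K' ρ‖ ≤ ε⁻¹ * (1 + ‖l‖ * ε⁻¹) * Real.exp (2 * (ρ * (w.re - L))) *
          ((1 + L) * (|w.re| + θ + 1)) := by
          rw [norm_mul, ← hre]
          gcongr
          · exact norm_remainderKernel_mul_one_sub_le hε (le_norm ρ h)
          · exact norm_sub_ofReal_le hw hL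
      _ ≤ ε⁻¹ * (1 + ‖l‖ * ε⁻¹) * (Real.exp (-(2 * ρ₁ * L)) * (1 + Real.exp (2 * w.re))) *
          ((1 + L) * (|w.re| + θ + 1)) := by
          have hθ := (abs_nonneg _).trans hw
          gcongr
          exact exp_two_mul_mul_sub_le (hρ₁.trans h.1) h.1 (h.2.trans hρ₂) _ hL
      _ = _ := by ring
  have hmvt := (convex_Icc ρ₁ ρ₂).norm_image_sub_le_of_norm_hasDerivWithin_le hderiv hbound
    (left_mem_Icc.2 hρ) (right_mem_Icc.2 hρ)
  rwa [Real.norm_of_nonneg (sub_nonneg.2 hρ)] at hmvt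

lemma integrable_exp_exp_mul_remainderKernel {ρ : ℝ} (hρ₀ : 0 ≤ ρ) (hρ₁ : ρ ≤ 1) (L : ℝ) {σ : ℝ}
    (hσ : |σ| ≤ θ) (hcos : Real.cos σ < 0) :
    Integrable fun u : ℝ => exp (exp (u + σ * I)) *
      (exp (u + σ * I) * remainderKernel l (ρ * (u + σ * I - L))) := by
  refine integrable_exp_exp_mul hcos (by unfold remainderKernel; fun_prop) (b := 1 + 2 * ρ)
    (B := ε⁻¹ * Real.exp (-(2 * ρ * L))) (by positivity) fun u => ?_
  have hle := norm_remainderKernel_le hε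
    (hl _ (abs_im_ofReal_mul_sub_ofReal_le hρ₀ hρ₁ (w := u + σ * I) (by simpa using hσ) L))
  calc ‖exp (u + σ * I) * remainderKernel l (ρ * (u + σ * I - L))‖
      ≤ Real.exp u * (ε⁻¹ * Real.exp (2 * (ρ * (u - L)))) := by
        rw [norm_mul, norm_exp]
        gcongr
        · simp
        · simpa using hle
    _ = ε⁻¹ * Real.exp (-(2 * ρ * L)) * Real.exp ((1 + 2 * ρ) * u) := by
        rw [mul_left_comm, mul_assoc, ← Real.exp_add, ← Real.exp_add]
        ring_nf

lemma norm_integral_remainderKernel_sub_le {ρ₁ ρ₂ : ℝ} (hρ₁ : 0 ≤ ρ₁) (hρ : ρ₁ ≤ ρ₂) (hρ₂ : ρ₂ ≤ 1)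
    {L : ℝ} (hL : 0 ≤ L) {σ : ℝ} (hσ : |σ| ≤ θ) (hcos : Real.cos σ < 0) :
    ‖(∫ u : ℝ, exp (exp (u + σ * I)) *
          (exp (u + σ * I) * remainderKernel l (ρ₂ * (u + σ * I - L)))) -
        ∫ u : ℝ, exp (exp (u + σ * I)) *
          (exp (u + σ * I) * remainderKernel l (ρ₁ * (u + σ * I - L)))‖ ≤
      ε⁻¹ * (1 + ‖l‖ * ε⁻¹) * ((1 + L) * Real.exp (-(2 * ρ₁ * L))) * (ρ₂ - ρ₁) *
        ∫ u : ℝ, Real.exp (u - -Real.cos σ * Real.exp u) *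
          ((|u| + (θ + 1)) * (1 + Real.exp (2 * u))) := by
  rw [← integral_sub
    (integrable_exp_exp_mul_remainderKernel hε hl (hρ₁.trans hρ) hρ₂ L hσ hcos)
    (integrable_exp_exp_mul_remainderKernel hε hl hρ₁ (hρ.trans hρ₂) L hσ hcos),
    ← integral_const_mul]
  refine norm_integral_le_of_norm_le ((integrable_exp_mul_sub_mul_exp_mul_abs_add (θ + 1)
    (neg_pos.2 hcos)).const_mul _) (ae_of_all _ fun u => ?_)
  have hle := norm_remainderKernel_mul_sub_le hε hl hρ₁ hρ hρ₂ (w := u + σ * I)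
    (by simpa using hσ) hL
  have hre : ((u : ℂ) + σ * I).re = u := by simp
  have hnorm : ‖exp (exp (u + σ * I)) * exp (u + σ * I)‖ =
      Real.exp (u - -Real.cos σ * Real.exp u) := by
    rw [norm_mul, norm_exp_exp, norm_exp, hre, ← Real.exp_add]
    ring_nf
  rw [hre] at hle
  rw [← mul_sub, ← mul_sub, ← mul_assoc, norm_mul, hnorm]
  exact (mul_le_mul_of_nonneg_left hle (Real.exp_pos _).le).trans_eq (by ring)

lemma exists_norm_remainderIntegral_sub_le (hθ : 0 ≤ θ) (hcos : Real.cos θ < 0) :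
    ∃ D ≥ 0, ∀ ρ₁ ρ₂ L : ℝ, 0 ≤ ρ₁ → ρ₁ ≤ ρ₂ → ρ₂ ≤ 1 → 0 ≤ L →
      ‖remainderIntegral l θ L ρ₂ - remainderIntegral l θ L ρ₁‖ ≤
        D * ((1 + L) * Real.exp (-(2 * ρ₁ * L))) * (ρ₂ - ρ₁) := by
  set J := ∫ u : ℝ, Real.exp (u - -Real.cos θ * Real.exp u) *
    ((|u| + (θ + 1)) * (1 + Real.exp (2 * u)))
  have hJ : 0 ≤ J := integral_nonneg fun u => by positivity
  refine ⟨2 * (ε⁻¹ * (1 + ‖l‖ * ε⁻¹)) * J, mul_nonneg (by positivity) hJ,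
    fun ρ₁ ρ₂ L hρ₁ hρ hρ₂ hL => ?_⟩
  have hpos := norm_integral_remainderKernel_sub_le hε hl hρ₁ hρ hρ₂ hL
    (abs_of_nonneg hθ).le hcos
  have hneg := norm_integral_remainderKernel_sub_le hε hl hρ₁ hρ hρ₂ hL (σ := -θ)
    (by rw [abs_neg, abs_of_nonneg hθ]) (by rwa [Real.cos_neg])
  rw [Real.cos_neg] at hneg
  rw [remainderIntegral, remainderIntegral, stripIntegral, stripIntegral, sub_sub_sub_comm]
  linarith [norm_sub_le_of_le hpos hneg]

end Remainder

section Expansion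

/-- The coefficient of `e^{-ρ log t}` in the large-time expansion of
`l² t · t^{ρ-1} E_{ρ,ρ}(l t^ρ)`. It equals `-1 / Γ(-ρ)`; the form chosen here has no poles on
`ρ ≤ 1`. -/
noncomputable def leadingCoeff (ρ : ℝ) : ℝ := (1 - ρ) * (ρ / Real.Gamma (2 - ρ))

lemma inv_Gamma_neg (ρ : ℝ) : (Gamma (-ρ))⁻¹ = -(leadingCoeff ρ : ℂ) := by
  have hshift : (-ρ + 1 + 1 : ℂ) = ((2 - ρ : ℝ) : ℂ) := by push_cast; ring
  rw [one_div_Gamma_eq_self_mul_one_div_Gamma_add_one,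
    one_div_Gamma_eq_self_mul_one_div_Gamma_add_one, hshift, Gamma_ofReal, leadingCoeff]
  push_cast
  ring

variable {l : ℂ} {θ ε : ℝ} (hε : 0 < ε) (hl : ∀ ζ : ℂ, |ζ.im| ≤ θ → ε ≤ ‖exp ζ - l‖)
include hε hl

lemma sq_mul_integral_exp_exp_mul_inv_exp_sub {ρ : ℝ} (hρ₀ : 0 ≤ ρ) (hρ₁ : ρ ≤ 1) (L : ℝ) {σ : ℝ}
    (hσ : |σ| ≤ θ) (hcos : Real.cos σ < 0) :
    l ^ 2 * ∫ u : ℝ, exp (exp (u + σ * I)) *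
        (exp (u + σ * I) * (exp (ρ * (u + σ * I - L)) - l)⁻¹) =
      -l * (∫ u : ℝ, exp (exp (u + σ * I)) * exp (1 * (u + σ * I))) -
        exp (-(ρ * L)) * (∫ u : ℝ, exp (exp (u + σ * I)) * exp ((1 + ρ) * (u + σ * I))) +
        ∫ u : ℝ, exp (exp (u + σ * I)) *
          (exp (u + σ * I) * remainderKernel l (ρ * (u + σ * I - L))) := by
  have hre : 0 < (1 + ρ : ℂ).re := by
    rw [add_re, one_re, ofReal_re]
    linarith
  have hint₁ := (integrable_exp_exp_mul_exp (a := 1) (by simp) hcos).const_mul (-l)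
  have hint₂ := (integrable_exp_exp_mul_exp hre hcos).const_mul (exp (-(ρ * L)))
  have hint₁₂ : Integrable fun u : ℝ => -l * (exp (exp (u + σ * I)) * exp (1 * (u + σ * I))) -
      exp (-(ρ * L)) * (exp (exp (u + σ * I)) * exp ((1 + ρ) * (u + σ * I))) := hint₁.sub hint₂
  rw [← integral_const_mul, ← integral_const_mul, ← integral_const_mul,
    ← integral_sub hint₁ hint₂, ← integral_add hint₁₂
      (integrable_exp_exp_mul_remainderKernel hε hl hρ₀ hρ₁ L hσ hcos)]
  congr 1 with u
  set w : ℂ := u + σ * I with hw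
  have hne : exp (ρ * (w - L)) - l ≠ 0 := norm_pos_iff.1 (hε.trans_le
    (hl _ (abs_im_ofReal_mul_sub_ofReal_le hρ₀ hρ₁ (by simpa [hw] using hσ) L)))
  have hexp : exp (-(ρ * L)) * exp ((1 + ρ) * w) = exp w * exp (ρ * (w - L)) := by
    simp only [← exp_add]
    ring_nf
  have hsq : exp (2 * (ρ * (w - L))) = exp (ρ * (w - L)) ^ 2 := by simp [← exp_nat_mul]
  rw [mul_left_comm (exp (-(ρ * L))), hexp, remainderKernel, hsq, one_mul]
  field_simp
  ring

lemma sq_mul_stripIntegral_exp_exp_mul_inv_exp_sub (hθ : θ ∈ Ioc (π / 2) π) {ρ : ℝ} (hρ₀ : 0 ≤ ρ)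
    (hρ₁ : ρ ≤ 1) (L : ℝ) :
    l ^ 2 * stripIntegral θ (fun w => exp (exp w) * (exp w * (exp (ρ * (w - L)) - l)⁻¹)) =
      2 * π * I * (Real.exp (-(ρ * L)) * leadingCoeff ρ : ℝ) + remainderIntegral l θ L ρ := by
  have hθ₀ : 0 ≤ θ := by linarith [hθ.1, Real.pi_pos]
  have hcos := cos_neg_of_mem_Ioc hθ
  have hpos := sq_mul_integral_exp_exp_mul_inv_exp_sub hε hl hρ₀ hρ₁ L
    (abs_of_nonneg hθ₀).le hcos
  have hneg := sq_mul_integral_exp_exp_mul_inv_exp_sub hε hl hρ₀ hρ₁ L (σ := -θ)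
    (by rw [abs_neg, abs_of_nonneg hθ₀]) (by rwa [Real.cos_neg])
  have hone := stripIntegral_exp_exp_mul_exp hθ (a := 1) (by simp)
  have honeadd := stripIntegral_exp_exp_mul_exp hθ (a := 1 + ρ) (by
    rw [add_re, one_re, ofReal_re]
    linarith)
  rw [sub_self, Gamma_zero, inv_zero, mul_zero] at hone
  rw [sub_add_cancel_left, inv_Gamma_neg] at honeadd
  rw [stripIntegral] at hone honeadd
  push_cast
  rw [remainderIntegral, stripIntegral, stripIntegral]
  linear_combination hpos - hneg - l * hone - exp (-(ρ * L)) * honeadd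

theorem sq_mul_rpow_mul_mittagLeffler2 (hθ : θ ∈ Ioc (π / 2) π) {ρ : ℝ} (hρ₀ : 0 < ρ)
    (hρ₁ : ρ ≤ 1) {t : ℝ} (ht : 0 < t) :
    l ^ 2 * (((t ^ (ρ - 1) : ℝ) : ℂ) * mittagLeffler2 ρ (l * ((t ^ ρ : ℝ) : ℂ))) =
      (t : ℂ)⁻¹ * ((Real.exp (-(ρ * Real.log t)) * leadingCoeff ρ : ℝ) + (2 * π * I)⁻¹ *
        remainderIntegral l θ (Real.log t) ρ) := by
  have hlim : Tendsto (fun x => ‖l‖ * Real.exp (-(ρ * (x - Real.log t)))) atTop (𝓝 0) := by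
    have h : Tendsto (fun x => ρ * (x - Real.log t)) atTop atTop :=
      (tendsto_atTop_add_const_right _ _ tendsto_id).const_mul_atTop hρ₀
    simpa using (Real.tendsto_exp_neg_atTop_nhds_zero.comp h).const_mul ‖l‖
  obtain ⟨x, hx⟩ := (hlim.eventually_lt_const one_pos).exists
  have le_norm (w : ℂ) (hw : |w.im| ≤ θ) : ε ≤ ‖exp (ρ * (w - Real.log t)) - l‖ :=
    hl _ (abs_im_ofReal_mul_sub_ofReal_le hρ₀.le hρ₁ hw _)
  have hshift := hankelIntegral_exp_exp_mul_eq_stripIntegral (by linarith [hθ.1, Real.pi_pos])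
    (cos_neg_of_mem_Ioc hθ) (G := fun w => exp w * (exp (ρ * (w - Real.log t)) - l)⁻¹)
    (fun w hw => ?_) (B := ε⁻¹) one_pos (fun w hw => ?_) x
  · rw [rpow_mul_mittagLeffler2_eq_hankelIntegral hθ hρ₀.le ht hx, hshift]
    have hpi : (2 * π * I : ℂ) ≠ 0 := two_pi_I_ne_zero
    have h := sq_mul_stripIntegral_exp_exp_mul_inv_exp_sub hε hl hθ hρ₀.le hρ₁ (Real.log t)
    rw [mul_left_comm, h, mul_assoc, mul_add, inv_mul_cancel_left₀ hpi]
  · have hne := norm_pos_iff.1 (hε.trans_le (le_norm w hw))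
    apply DifferentiableAt.differentiableWithinAt
    exact DifferentiableAt.mul (by fun_prop) (DifferentiableAt.fun_inv (by fun_prop) hne)
  · rw [norm_mul, norm_inv, norm_exp, one_mul, mul_comm]
    gcongr
    exact le_norm w hw

lemma exp_mul_leadingCoeff_sub_le_norm_remainderIntegral_sub (hθ : θ ∈ Ioc (π / 2) π) {ρ₁ ρ₂ : ℝ}
    (hρ₁ : 0 < ρ₁) (hρ₁' : ρ₁ ≤ 1) (hρ₂ : 0 < ρ₂) (hρ₂' : ρ₂ ≤ 1) {t : ℝ} (ht : 0 < t)
    (heq : ((t ^ (ρ₁ - 1) : ℝ) : ℂ) * mittagLeffler2 ρ₁ (l * ((t ^ ρ₁ : ℝ) : ℂ)) =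
      ((t ^ (ρ₂ - 1) : ℝ) : ℂ) * mittagLeffler2 ρ₂ (l * ((t ^ ρ₂ : ℝ) : ℂ))) :
    Real.exp (-(ρ₁ * Real.log t)) * leadingCoeff ρ₁ -
        Real.exp (-(ρ₂ * Real.log t)) * leadingCoeff ρ₂ ≤
      ‖remainderIntegral l θ (Real.log t) ρ₂ - remainderIntegral l θ (Real.log t) ρ₁‖ := by
  have h := congrArg (l ^ 2 * ·) heq
  simp only [sq_mul_rpow_mul_mittagLeffler2 hε hl hθ hρ₁ hρ₁' ht,
    sq_mul_rpow_mul_mittagLeffler2 hε hl hθ hρ₂ hρ₂' ht] at h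
  have hcancel := mul_left_cancel₀ (inv_ne_zero (ofReal_ne_zero.2 ht.ne')) h
  set m₁ := Real.exp (-(ρ₁ * Real.log t)) * leadingCoeff ρ₁
  set m₂ := Real.exp (-(ρ₂ * Real.log t)) * leadingCoeff ρ₂
  set R₁ := remainderIntegral l θ (Real.log t) ρ₁
  set R₂ := remainderIntegral l θ (Real.log t) ρ₂
  have hbalance : ((m₁ - m₂ : ℝ) : ℂ) = (2 * π * I)⁻¹ * (R₂ - R₁) := by
    push_cast
    linear_combination hcancel
  have hpi : ‖(2 * π * I : ℂ)⁻¹‖ ≤ 1 := by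
    have hnorm : ‖(2 * π * I : ℂ)‖ = 2 * π := by simp [abs_of_pos Real.pi_pos]
    rw [norm_inv, hnorm]
    exact inv_le_one_of_one_le₀ (by linarith [Real.pi_gt_three])
  calc m₁ - m₂ ≤ ‖((m₁ - m₂ : ℝ) : ℂ)‖ := by rw [norm_real]; exact Real.le_norm_self _
    _ = ‖(2 * π * I : ℂ)⁻¹‖ * ‖R₂ - R₁‖ := by rw [hbalance, norm_mul]
    _ ≤ ‖R₂ - R₁‖ := mul_le_of_le_one_left (norm_nonneg _) hpi

end Expansion

section LeadingTerm

lemma Gamma_add_le_Gamma_mul_rpow {x s : ℝ} (hx : 0 < x) (hs₀ : 0 ≤ s) (hs₁ : s ≤ 1) :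
    Real.Gamma (x + s) ≤ Real.Gamma x * x ^ s := by
  have hconv := Real.convexOn_log_Gamma.2 (mem_Ioi.2 hx) (mem_Ioi.2 (add_pos hx one_pos))
    (sub_nonneg.2 hs₁) hs₀ (sub_add_cancel 1 s)
  have hpoint : (1 - s) • x + s • (x + 1) = x + s := by simp only [smul_eq_mul]; ring
  have hΓ := Real.Gamma_pos_of_pos hx
  rw [hpoint, Function.comp_apply, Function.comp_apply, Function.comp_apply,
    Real.Gamma_add_one hx.ne', Real.log_mul hx.ne' hΓ.ne', smul_eq_mul, smul_eq_mul] at hconv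
  rw [← Real.log_le_log_iff (Real.Gamma_pos_of_pos (by positivity)) (by positivity),
    Real.log_mul hΓ.ne' (by positivity), Real.log_rpow hx]
  linarith

lemma Gamma_le_one_of_mem_Icc {x : ℝ} (hx : x ∈ Icc 1 2) : Real.Gamma x ≤ 1 := by
  simpa using Gamma_add_le_Gamma_mul_rpow one_pos (sub_nonneg.2 hx.1)
    (by linarith [hx.2] : x - 1 ≤ 1)

variable {β₀ ρ ρ₁ ρ₂ : ℝ}

lemma le_div_Gamma_two_sub (hρ₀ : 0 ≤ ρ) (hρ₁ : ρ ≤ 1) : ρ ≤ ρ / Real.Gamma (2 - ρ) :=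
  le_div_self hρ₀ (Real.Gamma_pos_of_pos (by linarith))
    (Gamma_le_one_of_mem_Icc ⟨by linarith, by linarith⟩)

lemma div_Gamma_two_sub_le_exp_mul (hβ₀ : 0 < β₀) (hρ₁ : β₀ ≤ ρ₁) (hρ : ρ₁ ≤ ρ₂) (hρ₂ : ρ₂ ≤ 1) :
    ρ₂ / Real.Gamma (2 - ρ₂) ≤
      Real.exp ((β₀⁻¹ + 1) * (ρ₂ - ρ₁)) * (ρ₁ / Real.Gamma (2 - ρ₁)) := by
  have hρ₁₀ : 0 < ρ₁ := hβ₀.trans_le hρ₁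
  have hnum : ρ₂ ≤ ρ₁ * Real.exp (β₀⁻¹ * (ρ₂ - ρ₁)) := by
    have hρ₁' : 1 ≤ ρ₁ * β₀⁻¹ := by rwa [← div_eq_mul_inv, one_le_div hβ₀]
    nlinarith [Real.add_one_le_exp (β₀⁻¹ * (ρ₂ - ρ₁)), sub_nonneg.2 hρ]
  have hden : Real.Gamma (2 - ρ₁) ≤ Real.Gamma (2 - ρ₂) * Real.exp (ρ₂ - ρ₁) := by
    have hpos : 0 < 2 - ρ₂ := by linarith
    have hrpow : (2 - ρ₂) ^ (ρ₂ - ρ₁) ≤ Real.exp (ρ₂ - ρ₁) := by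
      rw [Real.rpow_def_of_pos hpos, Real.exp_le_exp]
      exact mul_le_of_le_one_left (sub_nonneg.2 hρ)
        (by linarith [Real.log_le_sub_one_of_pos hpos])
    have hΓ := Gamma_add_le_Gamma_mul_rpow hpos (sub_nonneg.2 hρ) (by linarith)
    rw [sub_add_sub_cancel] at hΓ
    exact hΓ.trans (mul_le_mul_of_nonneg_left hrpow (Real.Gamma_pos_of_pos hpos).le)
  have hΓ₁ : 0 < Real.Gamma (2 - ρ₁) := Real.Gamma_pos_of_pos (by linarith)
  have hΓ₂ : 0 < Real.Gamma (2 - ρ₂) := Real.Gamma_pos_of_pos (by linarith)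
  rw [add_mul, one_mul, Real.exp_add, mul_div_assoc', div_le_div_iff₀ hΓ₂ hΓ₁]
  calc ρ₂ * Real.Gamma (2 - ρ₁)
      ≤ ρ₁ * Real.exp (β₀⁻¹ * (ρ₂ - ρ₁)) * (Real.Gamma (2 - ρ₂) * Real.exp (ρ₂ - ρ₁)) :=
        mul_le_mul hnum hden hΓ₁.le (by positivity)
    _ = _ := by ring

lemma mul_sub_mul_exp_le_exp_mul_leadingCoeff_sub (hβ₀ : 0 < β₀) (hρ₁ : β₀ ≤ ρ₁) (hρ : ρ₁ ≤ ρ₂)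
    (hρ₂ : ρ₂ ≤ 1) {L : ℝ} (hL : β₀⁻¹ + 1 ≤ L) :
    β₀ * (ρ₂ - ρ₁) * Real.exp (-(ρ₁ * L)) ≤
      Real.exp (-(ρ₁ * L)) * leadingCoeff ρ₁ - Real.exp (-(ρ₂ * L)) * leadingCoeff ρ₂ := by
  set p₁ := ρ₁ / Real.Gamma (2 - ρ₁)
  set p₂ := ρ₂ / Real.Gamma (2 - ρ₂)
  have hp₁ : β₀ ≤ p₁ := hρ₁.trans (le_div_Gamma_two_sub (by linarith) (by linarith))
  have hp : Real.exp (-(ρ₂ * L)) * p₂ ≤ Real.exp (-(ρ₁ * L)) * p₁ := by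
    calc Real.exp (-(ρ₂ * L)) * p₂
        ≤ Real.exp (-(ρ₂ * L)) * (Real.exp (L * (ρ₂ - ρ₁)) * p₁) := by
          gcongr
          refine (div_Gamma_two_sub_le_exp_mul hβ₀ hρ₁ hρ hρ₂).trans ?_
          gcongr
          linarith
      _ = Real.exp (-(ρ₁ * L)) * p₁ := by
          rw [← mul_assoc, ← Real.exp_add]
          ring_nf
  calc β₀ * (ρ₂ - ρ₁) * Real.exp (-(ρ₁ * L)) ≤ p₁ * (ρ₂ - ρ₁) * Real.exp (-(ρ₁ * L)) := by gcongr
    _ = Real.exp (-(ρ₁ * L)) * leadingCoeff ρ₁ - (1 - ρ₂) * (Real.exp (-(ρ₁ * L)) * p₁) := by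
        rw [leadingCoeff]
        ring
    _ ≤ Real.exp (-(ρ₁ * L)) * leadingCoeff ρ₁ - (1 - ρ₂) * (Real.exp (-(ρ₂ * L)) * p₂) := by
        gcongr
    _ = _ := by
        rw [leadingCoeff, leadingCoeff]
        ring

end LeadingTerm

lemma tendsto_one_add_mul_exp_neg_mul_atTop {b : ℝ} (hb : 0 < b) :
    Tendsto (fun L : ℝ => (1 + L) * Real.exp (-(b * L))) atTop (𝓝 0) := by
  have h := (tendsto_rpow_mul_exp_neg_mul_atTop_nhds_zero 0 b hb).add
    (tendsto_rpow_mul_exp_neg_mul_atTop_nhds_zero 1 b hb)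
  simpa [add_mul] using h

lemma exists_injOn_rpow_mul_mittagLeffler2 {β₀ : ℝ} (hβ₀ : 0 < β₀) {l : ℂ} (hl : l.re < 0) :
    ∃ D : ℝ, ∀ t : ℝ, 0 < t → β₀⁻¹ + 1 ≤ Real.log t →
      D * ((1 + Real.log t) * Real.exp (-(β₀ * Real.log t))) < β₀ →
      InjOn (fun ρ : ℝ => ((t ^ (ρ - 1) : ℝ) : ℂ) * mittagLeffler2 ρ (l * ((t ^ ρ : ℝ) : ℂ)))
        (Icc β₀ 1) := by
  obtain ⟨θ, hθ, ε, hε, hsector⟩ := exists_le_norm_exp_sub_of_re_neg hl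
  obtain ⟨D, hD, hrem⟩ := exists_norm_remainderIntegral_sub_le hε hsector
    (by linarith [hθ.1, Real.pi_pos]) (cos_neg_of_mem_Ioc hθ)
  refine ⟨D, fun t ht hlog hsmall => ?_⟩
  set L := Real.log t
  have hL : 0 ≤ L := (by positivity : 0 ≤ β₀⁻¹ + 1).trans hlog
  intro ρ₁ hρ₁ ρ₂ hρ₂ heq
  by_contra hne
  wlog hρ : ρ₁ < ρ₂ generalizing ρ₁ ρ₂
  · exact this hρ₂ hρ₁ heq.symm (Ne.symm hne) ((not_lt.1 hρ).lt_of_ne' hne)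
  have hρ₁₀ : 0 < ρ₁ := hβ₀.trans_le hρ₁.1
  have hρ₂₁ : 0 < ρ₂ - ρ₁ := sub_pos.2 hρ
  have hlower := mul_sub_mul_exp_le_exp_mul_leadingCoeff_sub hβ₀ hρ₁.1 hρ.le hρ₂.2 hlog
  have hupper := (exp_mul_leadingCoeff_sub_le_norm_remainderIntegral_sub hε hsector hθ hρ₁₀ hρ₁.2
    (hρ₁₀.trans hρ) hρ₂.2 ht heq).trans (hrem ρ₁ ρ₂ L hρ₁₀.le hρ.le hρ₂.2 hL)
  have hexp : Real.exp (-(2 * ρ₁ * L)) ≤ Real.exp (-(β₀ * L)) * Real.exp (-(ρ₁ * L)) := by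
    rw [← Real.exp_add, Real.exp_le_exp]
    linarith [mul_le_mul_of_nonneg_right hρ₁.1 hL]
  have hle : β₀ * ((ρ₂ - ρ₁) * Real.exp (-(ρ₁ * L))) ≤
      D * ((1 + L) * Real.exp (-(β₀ * L))) * ((ρ₂ - ρ₁) * Real.exp (-(ρ₁ * L))) := by
    calc β₀ * ((ρ₂ - ρ₁) * Real.exp (-(ρ₁ * L)))
        ≤ D * ((1 + L) * Real.exp (-(2 * ρ₁ * L))) * (ρ₂ - ρ₁) := by linarith
      _ ≤ D * ((1 + L) * (Real.exp (-(β₀ * L)) * Real.exp (-(ρ₁ * L)))) * (ρ₂ - ρ₁) := by gcongr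
      _ = _ := by ring
  exact hsmall.not_ge (le_of_mul_le_mul_right hle (mul_pos hρ₂₁ (Real.exp_pos _)))

theorem riemann_liouville_unique_order_general {β₀ : ℝ} (hβ₀ : 0 < β₀) {l : ℂ} (hl : l.re < 0) :
    ∃ T₁ : ℝ, 1 < T₁ ∧ ∀ t₀ : ℝ, T₁ ≤ t₀ →
      InjOn (fun ρ : ℝ => ((t₀ ^ (ρ - 1) : ℝ) : ℂ) *
        mittagLeffler2 ρ (l * ((t₀ ^ ρ : ℝ) : ℂ))) (Icc β₀ 1) := by
  obtain ⟨D, hinj⟩ := exists_injOn_rpow_mul_mittagLeffler2 hβ₀ hl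
  have hsmall : ∀ᶠ L : ℝ in atTop, D * ((1 + L) * Real.exp (-(β₀ * L))) < β₀ := by
    have h := (tendsto_one_add_mul_exp_neg_mul_atTop hβ₀).const_mul D
    rw [mul_zero] at h
    exact h.eventually_lt_const hβ₀
  obtain ⟨T, hT⟩ := eventually_atTop.1 ((Real.tendsto_log_atTop.eventually
    ((eventually_ge_atTop (β₀⁻¹ + 1)).and hsmall)).and (eventually_gt_atTop 1))
  exact ⟨T, (hT T le_rfl).2, fun t₀ ht₀ =>
    hinj t₀ (one_pos.trans (hT t₀ ht₀).2) (hT t₀ ht₀).1.1 (hT t₀ ht₀).1.2⟩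

/-- For `0 < β₀ < 1` and `Re λ < 0`, `|Re λ| ≠ |Im λ|`, there is `T₁ > 1` such that
for all `t₀ ≥ T₁`: any value `b` attained by `ρ ↦ t₀^{ρ−1} E_{ρ,ρ}(λ t₀^ρ)` on
`[β₀, 1)` is attained at a *unique* point `ρ* ∈ [β₀, 1]`. -/
theorem riemann_liouville_unique_order (β₀ : ℝ) (hβ₀ : 0 < β₀) (hβ₀1 : β₀ < 1)
    (l : ℂ) (hl : l.re < 0) (hl' : |l.re| ≠ |l.im|) :
    ∃ T₁ : ℝ, 1 < T₁ ∧ ∀ t₀ : ℝ, T₁ ≤ t₀ →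
      ∀ b ∈ (fun ρ : ℝ => ((t₀ ^ (ρ - 1) : ℝ) : ℂ) *
          mittagLeffler2 ρ (l * ((t₀ ^ ρ : ℝ) : ℂ))) '' Set.Ico β₀ 1,
        ∃! ρ : ℝ, ρ ∈ Set.Icc β₀ 1 ∧
          ((t₀ ^ (ρ - 1) : ℝ) : ℂ) * mittagLeffler2 ρ (l * ((t₀ ^ ρ : ℝ) : ℂ)) = b := by
  obtain ⟨T₁, hT₁, hinj⟩ := riemann_liouville_unique_order_general hβ₀ hl
  refine ⟨T₁, hT₁, ?_⟩
  rintro t₀ ht₀ _ ⟨ρ, hρ, rfl⟩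
  have hρ' := Ico_subset_Icc_self hρ
  exact ⟨ρ, ⟨hρ', rfl⟩, fun ρ' h => hinj t₀ ht₀ h.1 hρ' h.2⟩
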